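/- Let t₀ > 0 and let f be a holomorphic function on the polydisc {ψ < −t₀} with Taylor expansion f(w) = Σ_{α ∈ (ℤ_{≥0})ⁿ} b_α w^α. Set q_α := Σ_{j=1}^n (α_j+1)/p_j − 1 and E₁ := {α ∈ (ℤ_{≥0})ⁿ : q_α = 0}. Then for every t > t₀, as an equality in [0,+∞], ∫_{{−t−1 < ψ < −t}} |f|² e^{−ψ} dλ_n = Σ_{α ∈ E₁} |b_α|² πⁿ / Π_{j=1}^n (α_j+1) + Σ_{α ∉ E₁} |b_α|² πⁿ (q_α+1)(e^{−q_α t} − e^{−q_α (t+1)}) / (q_α · Π_{j=1}^n (α_j+1)). -/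

import Mathlib

open MeasureTheory Filter

/-- `psi p w = max_j 2 p_j log |w_j|`. -/
noncomputable def psi {n : ℕ} (p : Fin n → ℝ) (w : Fin n → ℂ) : ℝ :=
  ⨆ j, 2 * p j * Real.log ‖w j‖

/-- The polydisc `{ψ < s} = Π_j {|w_j| < e^{s/(2 p_j)}}`. -/
noncomputable def polydisc {n : ℕ} (p : Fin n → ℝ) (s : ℝ) : Set (Fin n → ℂ) :=
  {w | ∀ j, ‖w j‖ < Real.exp (s / (2 * p j))}

/-- `qExp p α = Σ_j (α_j + 1) / p_j`. -/
noncomputable def qExp {n : ℕ} (p : Fin n → ℝ) (α : Fin n → ℕ) : ℝ :=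
  ∑ j, ((α j : ℝ) + 1) / p j


noncomputable def tauM (n : ℕ) : Measure (UnitAddTorus (Fin n)) := Measure.pi (fun _ => AddCircle.haarAddCircle)
instance (n : ℕ) : IsProbabilityMeasure (tauM n) := by unfold tauM; infer_instance

lemma tauM_orth (n : ℕ) (a c : Fin n → ℤ) :
   inner ℂ (ContinuousMap.toLp (E := ℂ) 2 (tauM n) ℂ (UnitAddTorus.mFourier a)) (ContinuousMap.toLp (E := ℂ) 2 (tauM n) ℂ (UnitAddTorus.mFourier c)) = if a = c then 1 else 0 := by
  have := (orthonormal_iff_ite.1 (UnitAddTorus.orthonormal_mFourier (d := Fin n))) a c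
  exact this

lemma mFourier_nat (n : ℕ) (a : Fin n → ℕ) (θ : UnitAddTorus (Fin n)) :
    UnitAddTorus.mFourier (fun j => (a j : ℤ)) θ = ∏ j, (fourier 1 (θ j) : ℂ) ^ (a j) := by
  simp only [UnitAddTorus.mFourier, ContinuousMap.coe_mk]
  refine Finset.prod_congr rfl fun j _ => ?_
  rw [fourier_apply, fourier_apply, natCast_zsmul, AddCircle.toCircle_nsmul, one_zsmul]
  simp

lemma parseval_aux (n : ℕ) (c : (Fin n → ℕ) → ℂ) (hc : Summable fun α => ‖c α‖)
    (F : UnitAddTorus (Fin n) → ℂ)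
    (hF : ∀ θ, HasSum (fun α => c α * ∏ j, (fourier 1 (θ j) : ℂ) ^ (α j)) (F θ)) :
    ∫⁻ θ, ENNReal.ofReal (‖F θ‖ ^ 2) ∂(tauM n) = ∑' α, ENNReal.ofReal (‖c α‖ ^ 2) := by
  let e : (Fin n → ℕ) → C(UnitAddTorus (Fin n), ℂ) :=
    fun α => UnitAddTorus.mFourier (fun j => (α j : ℤ))
  have hs : Summable fun α => c α • e α := by
    apply Summable.of_norm
    refine hc.congr fun α => ?_
    rw [norm_smul, UnitAddTorus.mFourier_norm, mul_one]
  obtain ⟨G, hG⟩ := hs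
  have hGF : ∀ θ, G θ = F θ := by
    intro θ
    have h1 : HasSum (fun α => (c α • e α) θ) (G θ) :=
      (ContinuousMap.hasSum_apply hG θ)
    refine h1.unique ?_
    convert hF θ using 2 with α
    simp only [ContinuousMap.smul_apply, smul_eq_mul, e]
    rw [mFourier_nat]
  let T := ContinuousMap.toLp (E := ℂ) 2 (tauM n) ℂ
  have hT : HasSum (fun α => c α • T (e α)) (T G) := by
    have := hG.mapL T
    simpa using this
  have horth : ∀ α β, inner ℂ (T (e α)) (T (e β)) = if α = β then (1:ℂ) else 0 := by
    intro α β
    have := tauM_orth n (fun j => (α j : ℤ)) (fun j => (β j : ℤ))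
    refine this.trans ?_
    congr 1
    simp [funext_iff]
  have hcoef : ∀ α, inner ℂ (T (e α)) (T G) = c α := by
    intro α
    have h1 := hT.mapL (innerSL ℂ (T (e α)))
    have h2 : HasSum (fun β => if β = α then c α else 0) (c α) := hasSum_ite_eq α (c α)
    refine h1.unique ?_
    have h5 : (fun β => innerSL ℂ (T (e α)) (c β • T (e β))) = fun β => if β = α then c α else 0 := by
      funext β
      rw [innerSL_apply_apply, inner_smul_right, horth]
      by_cases h : β = α
      · simp [h]
      · simp [h, Ne.symm h]
    rw [h5]
    exact h2
  have h3 : HasSum (fun α => ((‖c α‖ ^ 2 : ℝ) : ℂ)) (inner ℂ (T G) (T G)) := by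
    have h1 := hT.mapL (innerSL ℂ (T G))
    simp only [innerSL_apply_apply, inner_smul_right] at h1
    have h5 : (fun α => ((‖c α‖ ^ 2 : ℝ) : ℂ)) = fun α => c α * inner ℂ (T G) (T (e α)) := by
      funext α
      rw [← inner_conj_symm, hcoef, Complex.mul_conj, Complex.normSq_eq_norm_sq]
    rw [h5]
    exact h1
  have h4 : inner ℂ (T G) (T G) = ((∫ θ, ‖F θ‖ ^ 2 ∂(tauM n) : ℝ) : ℂ) := by
    have := ContinuousMap.inner_toLp (𝕜 := ℂ) (tauM n) G G
    refine this.trans ?_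
    rw [← integral_complex_ofReal]
    congr 1; ext θ
    rw [Complex.mul_conj, Complex.normSq_eq_norm_sq, hGF]
  rw [h4, Complex.hasSum_ofReal] at h3
  have hFG : F = G := funext fun θ => (hGF θ).symm
  rw [← ofReal_integral_eq_lintegral_ofReal, ← h3.tsum_eq,
    ENNReal.ofReal_tsum_of_nonneg (fun _ => by positivity) h3.summable]
  · rw [hFG]
    have : Continuous fun θ => ‖G θ‖ ^ 2 := by fun_prop
    exact this.integrable_of_hasCompactSupport (HasCompactSupport.of_compactSpace _)
  · exact Eventually.of_forall fun _ => by positivity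

lemma one_dim (k : ℕ) (r : ℝ) (hr : 0 ≤ r) :
    ∫ z in Metric.closedBall (0:ℂ) r, ‖z‖ ^ (2 * k) = Real.pi * r ^ (2 * k + 2) / (k + 1) := by
  rw [← integral_indicator Metric.isClosed_closedBall.measurableSet]
  have h1 : (Metric.closedBall (0:ℂ) r).indicator (fun z => ‖z‖ ^ (2 * k)) =
      fun z : ℂ => (Set.Iic r).indicator (fun y : ℝ => y ^ (2 * k)) ‖z‖ := by
    ext z
    simp [Set.indicator]
  rw [h1, integral_fun_norm_addHaar]
  have h2 : ∀ y : ℝ, y ^ (Module.finrank ℝ ℂ - 1) • (Set.Iic r).indicator (fun y : ℝ => y ^ (2 * k)) y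
      = (Set.Iic r).indicator (fun y : ℝ => y ^ (2 * k + 1)) y := by
    intro y
    simp only [Complex.finrank_real_complex, Set.indicator]
    split_ifs <;> simp [pow_succ, mul_comm]
  simp only [h2]
  rw [setIntegral_indicator measurableSet_Iic, Set.Ioi_inter_Iic,
    ← intervalIntegral.integral_of_le hr, integral_pow]
  simp [Measure.real, Complex.volume_ball]
  field_simp
  ring

lemma box_integral (n : ℕ) (α : Fin n → ℕ) (r : Fin n → ℝ) (hr : ∀ j, 0 ≤ r j) :
    ∫⁻ w in Set.univ.pi (fun j => Metric.closedBall (0:ℂ) (r j)),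
      ENNReal.ofReal (∏ j, ‖w j‖ ^ (2 * α j)) =
    ENNReal.ofReal (∏ j, (Real.pi * (r j) ^ (2 * α j + 2) / (α j + 1))) := by
  rw [volume_pi, Measure.restrict_pi_pi, ← ofReal_integral_eq_lintegral_ofReal]
  · rw [integral_fintype_prod_eq_prod (𝕜 := ℝ) (f := fun j (z : ℂ) => ‖z‖ ^ (2 * α j))]
    congr 1
    exact Finset.prod_congr rfl fun j _ => one_dim (α j) (r j) (hr j)
  · refine Integrable.fintype_prod (𝕜 := ℝ) (f := fun j (z : ℂ) => ‖z‖ ^ (2 * α j)) fun j => ?_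
    exact ContinuousOn.integrableOn_compact (isCompact_closedBall _ _)
      (by fun_prop)
  · exact Eventually.of_forall fun _ => Finset.prod_nonneg fun _ _ => by positivity

lemma psi_le_iff {n : ℕ} (hn : 0 < n) (p : Fin n → ℝ) (w : Fin n → ℂ) (s : ℝ) :
    psi p w ≤ s ↔ ∀ j, 2 * p j * Real.log ‖w j‖ ≤ s := by
  have : Nonempty (Fin n) := ⟨⟨0, hn⟩⟩
  exact ciSup_le_iff (Set.finite_range _).bddAbove

lemma le_psi {n : ℕ} (p : Fin n → ℝ) (w : Fin n → ℂ) (j : Fin n) :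
    2 * p j * Real.log ‖w j‖ ≤ psi p w :=
  le_ciSup (f := fun j => 2 * p j * Real.log ‖w j‖) (Set.finite_range _).bddAbove j

lemma psi_measurable {n : ℕ} (hn : 0 < n) (p : Fin n → ℝ) : Measurable (psi p) := by
  refine measurable_of_Iic fun s => ?_
  have : psi p ⁻¹' Set.Iic s = ⋂ j, {w | 2 * p j * Real.log ‖w j‖ ≤ s} := by
    ext w
    simp [psi_le_iff hn]
  rw [this]
  refine MeasurableSet.iInter fun j => measurableSet_le ?_ measurable_const
  fun_prop

lemma log_aux {p x s : ℝ} (hp : 0 < p) (hx : 0 < x) :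
    2 * p * Real.log x ≤ s ↔ x ≤ Real.exp (s / (2 * p)) := by
  rw [← Real.log_le_iff_le_exp hx, le_div_iff₀ (by positivity), mul_comm]

lemma ae_ne (n : ℕ) : ∀ᵐ w : Fin n → ℂ, ∀ j, w j ≠ 0 := by
  rw [ae_all_iff]
  intro j
  have := Measure.pi_hyperplane (fun _ : Fin n => (volume : Measure ℂ)) j 0
  rw [← volume_pi] at this
  rw [ae_iff]
  simpa using this

lemma sub_integral {n : ℕ} (hn : 0 < n) (p : Fin n → ℝ) (hp : ∀ j, 0 < p j) (α : Fin n → ℕ) (s : ℝ) :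
    ∫⁻ w in {w | psi p w ≤ s}, ENNReal.ofReal (∏ j, ‖w j‖ ^ (2 * α j)) =
    ENNReal.ofReal (Real.pi ^ n / (∏ j, ((α j : ℝ) + 1)) * Real.exp (qExp p α * s)) := by
  have h1 : {w | psi p w ≤ s} =ᵐ[volume]
      Set.univ.pi (fun j => Metric.closedBall (0:ℂ) (Real.exp (s / (2 * p j)))) := by
    filter_upwards [ae_ne n] with w hw
    apply propext
    change psi p w ≤ s ↔ w ∈ Set.univ.pi (fun j => Metric.closedBall (0:ℂ) (Real.exp (s / (2 * p j))))
    rw [psi_le_iff hn]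
    simp only [Set.mem_univ_pi, mem_closedBall_zero_iff]
    exact forall_congr' fun j => log_aux (hp j) (norm_pos_iff.2 (hw j))
  rw [setLIntegral_congr h1, box_integral n α _ (fun j => (Real.exp_pos _).le)]
  congr 1
  have : ∀ j, Real.pi * (Real.exp (s / (2 * p j))) ^ (2 * α j + 2) / (α j + 1)
      = Real.pi / ((α j : ℝ) + 1) * Real.exp (((α j : ℝ) + 1) / p j * s) := by
    intro j
    rw [← Real.exp_nat_mul]
    have := (hp j).ne'
    have e : ((2 * α j + 2 : ℕ) : ℝ) * (s / (2 * p j)) = ((α j : ℝ) + 1) / p j * s := by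
      push_cast; field_simp
    rw [e]; ring
  simp only [this]
  rw [Finset.prod_mul_distrib, ← Real.exp_sum, ← Finset.sum_mul, Finset.prod_div_distrib]
  simp [qExp]

lemma qExp_pos {n : ℕ} (hn : 0 < n) (p : Fin n → ℝ) (hp : ∀ j, 0 < p j) (α : Fin n → ℕ) :
    0 < qExp p α := by
  have : Nonempty (Fin n) := ⟨⟨0, hn⟩⟩
  refine Finset.sum_pos (fun j _ => ?_) Finset.univ_nonempty
  have := hp j
  positivity

lemma map_eq_aux {n : ℕ} (hn : 0 < n) (p : Fin n → ℝ) (hp : ∀ j, 0 < p j) (α : Fin n → ℕ) (t : ℝ) :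
    ((volume.restrict {w | psi p w ≤ -t}).withDensity
      (fun w => ENNReal.ofReal (∏ j, ‖w j‖ ^ (2 * α j)))).map (psi p) =
    (volume.restrict (Set.Iic (-t))).withDensity
      (fun x => ENNReal.ofReal (Real.pi ^ n / (∏ j, ((α j : ℝ) + 1)) * qExp p α *
        Real.exp (qExp p α * x))) := by
  have hm := psi_measurable hn p
  have hQ := qExp_pos hn p hp α
  have hfin : ∫⁻ w in {w | psi p w ≤ -t}, ENNReal.ofReal (∏ j, ‖w j‖ ^ (2 * α j)) ≠ ⊤ := by
    rw [sub_integral hn p hp]; exact ENNReal.ofReal_ne_top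
  have := isFiniteMeasure_withDensity hfin
  refine Measure.ext_of_Iic _ _ fun a => ?_
  rw [Measure.map_apply hm measurableSet_Iic, withDensity_apply _ (hm measurableSet_Iic),
    withDensity_apply _ measurableSet_Iic, Measure.restrict_restrict (hm measurableSet_Iic),
    Measure.restrict_restrict measurableSet_Iic, Set.Iic_inter_Iic]
  have : psi p ⁻¹' Set.Iic a ∩ {w | psi p w ≤ -t} = {w | psi p w ≤ min a (-t)} := by
    ext w; simp
  rw [this, sub_integral hn p hp, ← ofReal_integral_eq_lintegral_ofReal]
  · rw [integral_const_mul, integral_exp_mul_Iic hQ]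
    congr 1
    field_simp
  · exact (integrableOn_exp_mul_Iic hQ _).const_mul _
  · refine Eventually.of_forall fun x => ?_
    have : 0 < ∏ j, ((α j : ℝ) + 1) := Finset.prod_pos fun _ _ => by positivity
    change 0 ≤ _
    positivity

noncomputable def shellTerm {n : ℕ} (p : Fin n → ℝ) (t : ℝ) (α : Fin n → ℕ) : ℝ :=
  if qExp p α - 1 = 0 then Real.pi ^ n / ∏ j, ((α j : ℝ) + 1) else
    Real.pi ^ n * ((qExp p α - 1) + 1) *
          (Real.exp (-((qExp p α - 1) * t)) - Real.exp (-((qExp p α - 1) * (t + 1)))) /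
          ((qExp p α - 1) * ∏ j, ((α j : ℝ) + 1))

lemma shell_integral {n : ℕ} (hn : 0 < n) (p : Fin n → ℝ) (hp : ∀ j, 0 < p j) (α : Fin n → ℕ)
    (t : ℝ) :
    ∫⁻ w in {w : Fin n → ℂ | -t - 1 < psi p w ∧ psi p w < -t},
      ENNReal.ofReal (∏ j, ‖w j‖ ^ (2 * α j)) * ENNReal.ofReal (Real.exp (-psi p w)) =
    ENNReal.ofReal (shellTerm p t α) := by
  have hm := psi_measurable hn p
  have hQ := qExp_pos hn p hp α
  have hP : 0 < ∏ j, ((α j : ℝ) + 1) := Finset.prod_pos fun _ _ => by positivity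
  have hS : {w : Fin n → ℂ | -t - 1 < psi p w ∧ psi p w < -t} = psi p ⁻¹' Set.Ioo (-t-1) (-t) := rfl
  have hSm := hm (measurableSet_Ioo (a := -t-1) (b := -t))
  have hd : Measurable fun w : Fin n → ℂ => ENNReal.ofReal (∏ j, ‖w j‖ ^ (2 * α j)) := by fun_prop
  have hd2 : Measurable fun x : ℝ => ENNReal.ofReal (Real.pi ^ n / (∏ j, ((α j : ℝ) + 1)) * qExp p α *
        Real.exp (qExp p α * x)) := by fun_prop
  have he : Measurable fun x : ℝ => ENNReal.ofReal (Real.exp (-x)) := by fun_prop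
  have key : ∫⁻ x in Set.Ioo (-t-1) (-t), ENNReal.ofReal (Real.exp (-x)) ∂(((volume.restrict {w | psi p w ≤ -t}).withDensity
      (fun w => ENNReal.ofReal (∏ j, ‖w j‖ ^ (2 * α j)))).map (psi p)) =
      ∫⁻ x in Set.Ioo (-t-1) (-t), ENNReal.ofReal (Real.exp (-x)) ∂((volume.restrict (Set.Iic (-t))).withDensity
      (fun x => ENNReal.ofReal (Real.pi ^ n / (∏ j, ((α j : ℝ) + 1)) * qExp p α *
        Real.exp (qExp p α * x)))) := by rw [map_eq_aux hn p hp]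
  rw [setLIntegral_map measurableSet_Ioo he hm, restrict_withDensity hSm,
    restrict_withDensity measurableSet_Ioo,
    lintegral_withDensity_eq_lintegral_mul _ hd (g := fun w => ENNReal.ofReal (Real.exp (-psi p w))) (he.comp hm),
    lintegral_withDensity_eq_lintegral_mul _ hd2 he,
    Measure.restrict_restrict hSm, Measure.restrict_restrict measurableSet_Ioo] at key
  have i1 : psi p ⁻¹' Set.Ioo (-t-1) (-t) ∩ {w | psi p w ≤ -t} = psi p ⁻¹' Set.Ioo (-t-1) (-t) :=
    Set.inter_eq_left.2 fun w hw => hw.2.le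
  have i2 : Set.Ioo (-t-1) (-t) ∩ Set.Iic (-t) = Set.Ioo (-t-1) (-t) :=
    Set.inter_eq_left.2 fun w hw => hw.2.le
  rw [i1, i2] at key
  rw [hS]
  refine key.trans ?_
  have h5 : ∀ x : ℝ, ((fun x => ENNReal.ofReal (Real.pi ^ n / (∏ j, ((α j : ℝ) + 1)) * qExp p α *
        Real.exp (qExp p α * x))) * fun x => ENNReal.ofReal (Real.exp (-x))) x =
      ENNReal.ofReal (Real.pi ^ n / (∏ j, ((α j : ℝ) + 1)) * qExp p α *
        Real.exp ((qExp p α - 1) * x)) := by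
    intro x
    simp only [Pi.mul_apply]
    rw [← ENNReal.ofReal_mul (by positivity), mul_assoc, ← Real.exp_add]
    congr 3; ring_nf
  simp only [h5]
  rw [← ofReal_integral_eq_lintegral_ofReal]
  · congr 1
    rw [integral_const_mul, ← integral_Ioc_eq_integral_Ioo,
      ← intervalIntegral.integral_of_le (by linarith)]
    unfold shellTerm
    split_ifs with h
    · have : qExp p α = 1 := by linarith
      rw [h, this]; simp
    · rw [intervalIntegral.integral_comp_mul_left (fun x => Real.exp x) h, integral_exp]
      have e1 : (qExp p α - 1) * (-t) = -((qExp p α - 1) * t) := by ring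
      have e2 : (qExp p α - 1) * (-t - 1) = -((qExp p α - 1) * (t + 1)) := by ring
      rw [e1, e2, smul_eq_mul]
      field_simp
      ring
  · have : Continuous fun x => Real.pi ^ n / (∏ j, ((α j : ℝ) + 1)) * qExp p α *
        Real.exp ((qExp p α - 1) * x) := by fun_prop
    exact (this.integrableOn_Icc).mono_set Set.Ioo_subset_Icc_self
  · refine Eventually.of_forall fun x => ?_
    change 0 ≤ _
    positivity

/-- Coordinatewise rotation of `w` by the point `θ` of the torus. -/
noncomputable def rotT {n : ℕ} (θ : UnitAddTorus (Fin n)) (w : Fin n → ℂ) : Fin n → ℂ :=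
  fun j => (fourier 1 (θ j) : ℂ) * w j

lemma norm_rotT {n : ℕ} (θ : UnitAddTorus (Fin n)) (w : Fin n → ℂ) (j : Fin n) :
    ‖rotT θ w j‖ = ‖w j‖ := by
  simp only [rotT, norm_mul, fourier_apply, Circle.norm_coe, one_mul]

lemma psi_rotT {n : ℕ} (p : Fin n → ℝ) (θ : UnitAddTorus (Fin n)) (w : Fin n → ℂ) :
    psi p (rotT θ w) = psi p w := by
  simp only [psi, norm_rotT]

lemma rotT_mp {n : ℕ} (θ : UnitAddTorus (Fin n)) :
    MeasurePreserving (rotT θ) volume volume := by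
  refine volume_preserving_pi (f := fun j z => (fourier 1 (θ j) : ℂ) * z) fun j => ?_
  have := (rotation (AddCircle.toCircle (1 • θ j))).measurePreserving
  have e : (fun z : ℂ => (fourier 1 (θ j) : ℂ) * z) = rotation (AddCircle.toCircle (1 • θ j)) := by
    funext z
    simp [fourier_apply, rotation_apply]
  rw [e]
  exact this

lemma rotT_cont {n : ℕ} : Continuous fun x : (Fin n → ℂ) × UnitAddTorus (Fin n) => rotT x.2 x.1 := by
  unfold rotT
  fun_prop

lemma main_aux (n : ℕ) (hn : 0 < n) (p : Fin n → ℝ) (hp : ∀ j, 0 < p j)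
    (t₀ : ℝ) (ht₀ : 0 < t₀) (f : (Fin n → ℂ) → ℂ) (b : (Fin n → ℕ) → ℂ)
    (hf : DifferentiableOn ℂ f (polydisc p (-t₀)))
    (hTaylor : ∀ w ∈ polydisc p (-t₀),
      HasSum (fun α : Fin n → ℕ => b α * ∏ j, (w j) ^ (α j)) (f w))
    (t : ℝ) (ht : t₀ < t) :
    (∫⁻ w in {w : Fin n → ℂ | -t - 1 < psi p w ∧ psi p w < -t},
        ENNReal.ofReal (‖f w‖ ^ 2 * Real.exp (-psi p w))) =
      ∑' α, ENNReal.ofReal (‖b α‖ ^ 2 * shellTerm p t α) := by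
  classical
  have hm := psi_measurable hn p
  set S : Set (Fin n → ℂ) := {w : Fin n → ℂ | -t - 1 < psi p w ∧ psi p w < -t} with hS
  have hSm : MeasurableSet S := hm (measurableSet_Ioo (a := -t-1) (b := -t))
  have hSD : S ⊆ polydisc p (-t₀) := by
    intro w hw j
    have h1 := (le_psi p w j).trans_lt hw.2
    have h0 : 0 < ‖w j‖ := by
      rcases (norm_nonneg (w j)).lt_or_eq with h | h
      · exact h
      · rw [← h] at h1; simp at h1; linarith
    rw [← Real.log_lt_iff_lt_exp h0, lt_div_iff₀ (by have := hp j; positivity)]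
    linarith
  have hDo : IsOpen (polydisc p (-t₀)) := by
    have : polydisc p (-t₀) = ⋂ j, {w | ‖w j‖ < Real.exp (-t₀ / (2 * p j))} := by
      ext w; simp [polydisc]
    rw [this]
    exact isOpen_iInter_of_finite fun j => isOpen_lt (by fun_prop) continuous_const
  have hFm : Measurable ((polydisc p (-t₀)).piecewise f (fun _ => 0)) :=
    hf.continuousOn.measurable_piecewise continuousOn_const hDo.measurableSet
  set H : (Fin n → ℂ) → ENNReal :=
    S.indicator fun w => ENNReal.ofReal (‖f w‖ ^ 2 * Real.exp (-psi p w)) with hH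
  have hHm : Measurable H := by
    have : H = S.indicator fun w => ENNReal.ofReal
        (‖(polydisc p (-t₀)).piecewise f (fun _ => 0) w‖ ^ 2 * Real.exp (-psi p w)) := by
      refine Set.indicator_congr fun w hw => ?_
      rw [Set.piecewise_eq_of_mem _ _ _ (hSD hw)]
    rw [this]
    refine Measurable.indicator ?_ hSm
    fun_prop
  have hrS : ∀ θ w, rotT θ w ∈ S ↔ w ∈ S := by
    intro θ w
    simp only [hS, Set.mem_ofPred_eq, psi_rotT]
  have hinner : ∀ w, ∫⁻ θ, H (rotT θ w) ∂(tauM n) = S.indicator (fun w => ∑' α,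
      ENNReal.ofReal (‖b α‖ ^ 2) * (ENNReal.ofReal (∏ j, ‖w j‖ ^ (2 * α j)) *
        ENNReal.ofReal (Real.exp (-psi p w)))) w := by
    intro w
    by_cases hw : w ∈ S
    · rw [Set.indicator_of_mem hw]
      have h1 : ∀ θ, H (rotT θ w) = ENNReal.ofReal (‖f (rotT θ w)‖ ^ 2) *
          ENNReal.ofReal (Real.exp (-psi p w)) := by
        intro θ
        rw [hH, Set.indicator_of_mem ((hrS θ w).2 hw), psi_rotT,
          ENNReal.ofReal_mul (by positivity)]
      simp only [h1]
      rw [lintegral_mul_const' _ _ ENNReal.ofReal_ne_top]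
      rw [parseval_aux n (fun α => b α * ∏ j, (w j) ^ (α j)) (hTaylor w (hSD hw)).summable.norm
        (fun θ => f (rotT θ w))]
      · rw [← ENNReal.tsum_mul_right]
        refine tsum_congr fun α => ?_
        rw [norm_mul, mul_pow, ENNReal.ofReal_mul (by positivity), mul_assoc, norm_prod,
          ← Finset.prod_pow]
        congr 4
        funext j
        rw [norm_pow, ← pow_mul, mul_comm]
      · intro θ
        have := hTaylor (rotT θ w) (hSD ((hrS θ w).2 hw))
        convert this using 2 with α
        simp only [rotT, mul_pow, Finset.prod_mul_distrib]
        ring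
    · rw [Set.indicator_of_notMem hw]
      have h1 : ∀ θ, H (rotT θ w) = 0 := fun θ =>
        Set.indicator_of_notMem (fun h => hw ((hrS θ w).1 h)) _
      simp [h1]
  have hHr : Measurable (Function.uncurry fun (w : Fin n → ℂ) (θ : UnitAddTorus (Fin n)) =>
      H (rotT θ w)) := hHm.comp rotT_cont.measurable
  calc (∫⁻ w in S, ENNReal.ofReal (‖f w‖ ^ 2 * Real.exp (-psi p w)))
      = ∫⁻ w, H w := (lintegral_indicator hSm _).symm
    _ = ∫⁻ θ, ∫⁻ w, H (rotT θ w) ∂volume ∂(tauM n) := by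
        have : ∀ θ, ∫⁻ w, H (rotT θ w) = ∫⁻ w, H w := fun θ => (rotT_mp θ).lintegral_comp hHm
        simp [this]
    _ = ∫⁻ w, ∫⁻ θ, H (rotT θ w) ∂(tauM n) :=
        (lintegral_lintegral_swap hHr.aemeasurable).symm
    _ = ∫⁻ w in S, ∑' α, ENNReal.ofReal (‖b α‖ ^ 2) * (ENNReal.ofReal (∏ j, ‖w j‖ ^ (2 * α j)) *
        ENNReal.ofReal (Real.exp (-psi p w))) := by
        simp only [hinner]
        exact lintegral_indicator hSm _
    _ = ∑' α, ENNReal.ofReal (‖b α‖ ^ 2 * shellTerm p t α) := by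
        rw [lintegral_tsum (fun α => by fun_prop)]
        refine tsum_congr fun α => ?_
        rw [lintegral_const_mul' _ _ ENNReal.ofReal_ne_top, shell_integral hn p hp α t,
          ENNReal.ofReal_mul (by positivity)]

theorem stmt_4 (n : ℕ) (hn : 0 < n) (p : Fin n → ℝ) (hp : ∀ j, 0 < p j)
    (t₀ : ℝ) (ht₀ : 0 < t₀) (f : (Fin n → ℂ) → ℂ) (b : (Fin n → ℕ) → ℂ)
    (hf : DifferentiableOn ℂ f (polydisc p (-t₀)))
    (hTaylor : ∀ w ∈ polydisc p (-t₀),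
      HasSum (fun α : Fin n → ℕ => b α * ∏ j, (w j) ^ (α j)) (f w))
    (t : ℝ) (ht : t₀ < t) :
    (∫⁻ w in {w : Fin n → ℂ | -t - 1 < psi p w ∧ psi p w < -t},
        ENNReal.ofReal (‖f w‖ ^ 2 * Real.exp (-psi p w))) =
      (∑' α : {α : Fin n → ℕ // qExp p α - 1 = 0},
        ENNReal.ofReal (‖b α.1‖ ^ 2 * Real.pi ^ n / ∏ j, ((α.1 j : ℝ) + 1))) +
      ∑' α : {α : Fin n → ℕ // qExp p α - 1 ≠ 0},
        ENNReal.ofReal (‖b α.1‖ ^ 2 * Real.pi ^ n * ((qExp p α.1 - 1) + 1) *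
          (Real.exp (-((qExp p α.1 - 1) * t)) - Real.exp (-((qExp p α.1 - 1) * (t + 1)))) /
          ((qExp p α.1 - 1) * ∏ j, ((α.1 j : ℝ) + 1))) := by
  rw [main_aux n hn p hp t₀ ht₀ f b hf hTaylor t ht,
    ← ENNReal.summable.tsum_add_tsum_compl (s := {α : Fin n → ℕ | qExp p α - 1 = 0})
      ENNReal.summable]
  congr 1
  · refine tsum_congr fun α => ?_
    have h : qExp p α.1 - 1 = 0 := α.2
    simp only [shellTerm, if_pos h]
    congr 1
    ring
  · refine tsum_congr fun α => ?_
    have h : ¬ qExp p α.1 - 1 = 0 := α.2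
    simp only [shellTerm, if_neg h]
    congr 1
    ring
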